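/- For p ∈ [0,1] and r : ℝ, define the lifting δ^{p,r} for the functor X ↦ D (ℝ × X) by δ^{p,r} X U = { d ∈ D (ℝ × X) | ∑ over those pairs (r, u) in d.support with u ∈ U of d (r, u) = p }. The family (δ^{p,r})_{p ∈ [0,1], r ∈ ℝ} is separating for the functor X ↦ D (ℝ × X). -/

import Mathlib

open CategoryTheory
open scoped NNReal Classical

universe u v

/-- A family of predicate liftings is separating if any two distinct elements of `F.obj X`
are distinguished by some lifting applied to some subset. -/
def IsSeparating (F : Type u ⥤ Type u) {ι : Type v}
    (Λ : ι → (X : Type u) → Set X → Set (F.obj X)) : Prop :=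
  ∀ (X : Type u) (x y : F.obj X), x ≠ y →
    ∃ (i : ι) (U : Set X), Xor' (x ∈ Λ i X U) (y ∈ Λ i X U)

/-- The finite distribution functor `D : Type u ⥤ Type u`. -/
noncomputable def DistFunctor : Type u ⥤ Type u where
  obj X := { d : X →₀ ℝ≥0 // ∑ x ∈ d.support, d x = 1 }
  map f := ↾fun d => ⟨Finsupp.mapDomain f d.1, by
    have h : (Finsupp.mapDomain f d.1).sum (fun _ v => v) = d.1.sum (fun _ v => v) :=
      Finsupp.sum_mapDomain_index (fun _ => rfl) (fun _ _ _ => rfl)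
    simpa [Finsupp.sum] using h.trans (by simpa [Finsupp.sum] using d.2)⟩
  map_id X := by
    refine ConcreteCategory.hom_ext _ _ fun d => ?_
    exact Subtype.ext Finsupp.mapDomain_id
  map_comp f g := by
    refine ConcreteCategory.hom_ext _ _ fun d => ?_
    exact Subtype.ext (Finsupp.mapDomain_comp (v := d.1) (f := f) (g := g))

/-- The functor `X ↦ D (ℝ × X)`, acting on `f` via `Finsupp.mapDomain (Prod.map id f)`. -/
noncomputable def DRFunctor : Type u ⥤ Type u where
  obj X := DistFunctor.obj (ℝ × X)
  map {X Y} f := DistFunctor.map (↾(Prod.map id f : ℝ × X → ℝ × Y))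
  map_id X := DistFunctor.map_id (ℝ × X)
  map_comp {X Y Z} f g :=
    DistFunctor.map_comp (↾(Prod.map id f : ℝ × X → ℝ × Y)) (↾(Prod.map id g : ℝ × Y → ℝ × Z))

/-- `δ^{p,r}`: distributions on `ℝ × X` whose mass on pairs `(r, u)` with `u ∈ U` is `p`. -/
noncomputable def dreqLifting (p : ℝ≥0) (r : ℝ) (X : Type u) (U : Set X) :
    Set (DRFunctor.obj X) :=
  { d | ∑ z ∈ d.1.support.filter (fun z => z.1 = r ∧ z.2 ∈ U), d.1 z = p }

/-- The mass on `{r} × {a}` is the value at `(r, a)`. -/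
theorem sum_filter_singleton_aux {X : Type u} (d : (ℝ × X) →₀ ℝ≥0) (r : ℝ) (a : X) :
    ∑ z ∈ d.support.filter (fun z => z.1 = r ∧ z.2 ∈ ({a} : Set X)), d z = d (r, a) := by
  rw [Finset.sum_filter, Finset.sum_eq_single (r, a)]
  · simp
  · rintro ⟨s, b⟩ _ hne
    rw [if_neg]
    rintro ⟨h1, h2⟩
    exact hne (Prod.ext h1 h2)
  · intro h
    simpa using h

/-- The family `(δ^{p,r})_{p ∈ [0,1], r ∈ ℝ}` is separating for `X ↦ D (ℝ × X)`. -/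
theorem dreqLifting_isSeparating :
    IsSeparating DRFunctor.{u}
      (fun (q : Set.Icc (0 : ℝ≥0) 1 × ℝ) (X : Type u) (U : Set X) =>
        dreqLifting q.1.1 q.2 X U) := by
  intro X x y hxy
  have hne : ∃ z, x.1 z ≠ y.1 z := by
    by_contra h
    push Not at h
    exact hxy (Subtype.ext (Finsupp.ext h))
  obtain ⟨⟨r, a⟩, hz⟩ := hne
  have hle : x.1 (r, a) ≤ 1 := by
    by_cases hm : (r, a) ∈ x.1.support
    · exact (Finset.single_le_sum (f := fun z => x.1 z) (fun _ _ => bot_le) hm).trans x.2.le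
    · rw [Finsupp.notMem_support_iff.mp hm]
      exact zero_le_one
  refine ⟨(⟨x.1 (r, a), bot_le, hle⟩, r), {a}, Or.inl ⟨?_, ?_⟩⟩
  · exact sum_filter_singleton_aux x.1 r a
  · intro h
    exact hz ((sum_filter_singleton_aux y.1 r a).symm.trans h).symm
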